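/- arXiv:2210.05759 — 3 statements merged into one kernel-verified Lean document; each statement's English description precedes it below -/
import Mathlib

section
/- Let (x₁', x₂', x₁'', x₂'') be four points of ℝ × ℝ³ satisfying conditions (i), (ii) and (iii). If x₁'⁰ ≥ x₁''⁰, then x₂''⁰ − x₂'⁰ ≤ |𝐱₂' − 𝐱₂''|. -/
/-!
Suppose `x₂''⁰ - x₂'⁰ > |𝐱₂' - 𝐱₂''|`, i.e. `x₂'` lies in the open past cone of `x₂''`. Since
`x₂''` causally precedes `x₁''`, which causally precedes `x₁'`, the point `x₂'` would lie in the
open past cone of `x₁'`, whereas it lies on the boundary of that cone.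
-/

/-- The causal order of the space-time `ℝ × M` with time coordinate first and speed of light `1`:
`y` lies in the closed future light cone of `x`. -/
def CausallyPrecedes {M : Type*} [PseudoMetricSpace M] (x y : ℝ × M) : Prop :=
  dist x.2 y.2 ≤ y.1 - x.1

namespace CausallyPrecedes

variable {M : Type*} [PseudoMetricSpace M] {x y z : ℝ × M}

theorem trans (hxy : CausallyPrecedes x y) (hyz : CausallyPrecedes y z) :
    CausallyPrecedes x z :=
  calc dist x.2 z.2 ≤ dist x.2 y.2 + dist y.2 z.2 := dist_triangle _ _ _
    _ ≤ (y.1 - x.1) + (z.1 - y.1) := add_le_add hxy hyz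
    _ = z.1 - x.1 := by ring

theorem of_dist_le_abs_sub (hdist : dist x.2 y.2 ≤ |y.1 - x.1|) (htime : x.1 ≤ y.1) :
    CausallyPrecedes x y :=
  hdist.trans_eq (abs_of_nonneg (sub_nonneg.mpr htime))

/-- Contrapositive form of the push-up property: if `x` is in the open past cone of `y` and `y`
causally precedes `z`, then `x` is in the open past cone of `z`. -/
theorem time_sub_le_dist (hyz : CausallyPrecedes y z) (hxz : z.1 - x.1 ≤ dist x.2 z.2) :
    y.1 - x.1 ≤ dist x.2 y.2 :=
  calc y.1 - x.1 = (z.1 - x.1) - (z.1 - y.1) := by ring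
    _ ≤ dist x.2 z.2 - dist y.2 z.2 := sub_le_sub hxz hyz
    _ ≤ dist x.2 y.2 := sub_le_iff_le_add.mpr (dist_triangle _ _ _)

end CausallyPrecedes

theorem retarded_case_key_inequality_general {M : Type*} [PseudoMetricSpace M]
    {x₁' x₂' x₁'' x₂'' : ℝ × M}
    (hi : x₁'.1 - dist x₁'.2 x₂'.2 ≤ x₂'.1)
    (hii : x₂''.1 ≤ x₁''.1 - dist x₁''.2 x₂''.2)
    (hiii : dist x₁'.2 x₁''.2 ≤ |x₁'.1 - x₁''.1|)
    (h : x₁''.1 ≤ x₁'.1) :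
    x₂''.1 - x₂'.1 ≤ dist x₂'.2 x₂''.2 := by
  have h₂₁ : CausallyPrecedes x₂'' x₁'' := by
    rw [dist_comm] at hii
    exact le_sub_comm.mp hii
  have h₁₁ : CausallyPrecedes x₁'' x₁' :=
    .of_dist_le_abs_sub (by rwa [dist_comm]) h
  have not_in_open_past : x₁'.1 - x₂'.1 ≤ dist x₂'.2 x₁'.2 := by
    rw [dist_comm]
    exact sub_le_comm.mp hi
  exact (h₂₁.trans h₁₁).time_sub_le_dist not_in_open_past

/-- For four space-time points of `ℝ × ℝ³` satisfying conditions
(i), (ii) and (iii), `x₁'⁰ ≥ x₁''⁰` implies `x₂''⁰ − x₂'⁰ ≤ |𝐱₂' − 𝐱₂''|`. -/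
theorem retarded_case_key_inequality
    (x₁' x₂' x₁'' x₂'' : ℝ × EuclideanSpace ℝ (Fin 3))
    (hi : x₂'.1 = x₁'.1 - ‖x₁'.2 - x₂'.2‖)
    (hii : x₂''.1 = x₁''.1 - ‖x₁''.2 - x₂''.2‖)
    (hiii : |x₁'.1 - x₁''.1| ≥ ‖x₁'.2 - x₁''.2‖)
    (h : x₁'.1 ≥ x₁''.1) :
    x₂''.1 - x₂'.1 ≤ ‖x₂'.2 - x₂''.2‖ := by
  simp only [← dist_eq_norm] at hi hii hiii ⊢
  exact retarded_case_key_inequality_general hi.ge hii.le hiii h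
end

section
/- Let j : (ℝ × ℝ³) × (ℝ × ℝ³) → ℝ^{4×4}, with components j^{μν}(x₁, x₂) for μ, ν ∈ {0,1,2,3}, be continuously differentiable, satisfy the two continuity equations Σ_{μ=0}^{3} ∂_{x₁^μ} j^{μν} = 0 for each ν and Σ_{ν=0}^{3} ∂_{x₂^ν} j^{μν} = 0 for each μ, and have spatially compact support, i.e. there are compact sets K₁, K₂ ⊂ ℝ³ with j(t₁, 𝐱₁, t₂, 𝐱₂) = 0 whenever 𝐱₁ ∉ K₁ or 𝐱₂ ∉ K₂. Then the generalized probability integral (t₁, t₂) ↦ ∫_{ℝ³} ∫_{ℝ³} j^{00}(t₁, 𝐱₁, t₂, 𝐱₂) d𝐱₁ d𝐱₂ is constant, i.e. independent of the pair of times (t₁, t₂). -/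
open MeasureTheory

/-- The coordinate direction in space-time `ℝ × ℝ³` corresponding to the
index `μ ∈ {0,1,2,3}`: the time direction for `μ = 0`, the `k`-th spatial
unit vector for `μ = k ∈ {1,2,3}`. -/
noncomputable def dir4 (μ : Fin 4) : ℝ × (Fin 3 → ℝ) :=
  if h : μ = 0 then (1, 0) else (0, Pi.single (μ.pred h) 1)

/-!
For one particle, differentiating the total charge `∫ ρ(t, x) dx` under the integral and inserting
`∂ₜρ = -div J` leaves the integral of a divergence of a compactly supported field, which vanishes.
For two particles, freezing the space-time point of one particle turns the continuity equation of
the other into a one-particle equation, so the inner integral does not depend on the inner time;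
Fubini's theorem makes either particle the inner one.
-/

section PartialDerivatives

variable {𝕜 E F G : Type*} [NontriviallyNormedField 𝕜] [NormedAddCommGroup E] [NormedSpace 𝕜 E]
  [NormedAddCommGroup F] [NormedSpace 𝕜 F] [NormedAddCommGroup G] [NormedSpace 𝕜 G]
  {f : E × F → G} {x : E} {y : F}

theorem fderiv_comp_prodMk_left_apply (hf : DifferentiableAt 𝕜 f (x, y)) (v : E) :
    fderiv 𝕜 (fun x' ↦ f (x', y)) x v = fderiv 𝕜 f (x, y) (v, 0) := by
  have hasFDerivAt_slice : HasFDerivAt (fun x' ↦ f (x', y)) _ x :=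
    hf.hasFDerivAt.comp x (hasFDerivAt_prodMk_left x y)
  simp [hasFDerivAt_slice.fderiv]

theorem fderiv_comp_prodMk_right_apply (hf : DifferentiableAt 𝕜 f (x, y)) (v : F) :
    fderiv 𝕜 (fun y' ↦ f (x, y')) y v = fderiv 𝕜 f (x, y) (0, v) := by
  have hasFDerivAt_slice : HasFDerivAt (fun y' ↦ f (x, y')) _ y :=
    hf.hasFDerivAt.comp y (hasFDerivAt_prodMk_right x y)
  simp [hasFDerivAt_slice.fderiv]

theorem hasDerivAt_comp_prodMk_left {f : 𝕜 × F → G} {t : 𝕜}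
    (hf : DifferentiableAt 𝕜 f (t, y)) :
    HasDerivAt (fun s ↦ f (s, y)) (fderiv 𝕜 f (t, y) (1, 0)) t :=
  hf.hasFDerivAt.comp_hasDerivAt t ((hasDerivAt_id t).prodMk (hasDerivAt_const t y))

end PartialDerivatives

section ParametricIntegral

variable {X F : Type*} [TopologicalSpace X] [T2Space X] [MeasurableSpace X]
  [OpensMeasurableSpace X] [NormedAddCommGroup F] [NormedSpace ℝ F]

theorem hasDerivAt_integral_of_continuous_of_isCompact {μ : Measure X}
    [IsFiniteMeasureOnCompacts μ] {f f' : ℝ → X → F} {K : Set X} (hK : IsCompact K)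
    (hf : ∀ t, Continuous (f t)) (hf' : Continuous (Function.uncurry f'))
    (hderiv : ∀ t x, HasDerivAt (f · x) (f' t x) t) (hsupp : ∀ t, ∀ x ∉ K, f t x = 0) (t : ℝ) :
    HasDerivAt (fun s ↦ ∫ x, f s x ∂μ) (∫ x, f' t x ∂μ) t := by
  have hsupp' : ∀ s, ∀ x ∉ K, f' s x = 0 := fun s x hx ↦
    (hderiv s x).unique <| (hasDerivAt_const s 0).congr_of_eventuallyEq <|
      .of_forall fun r ↦ hsupp r x hx
  have integrable_f : ∀ s, Integrable (f s) μ := fun s ↦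
    (hf s).integrable_of_hasCompactSupport (.intro hK (hsupp s))
  have integrable_f' : Integrable (f' t) μ :=
    (hf'.comp (.prodMk_right t)).integrable_of_hasCompactSupport (.intro hK (hsupp' t))
  obtain ⟨C, hC⟩ := ((isCompact_closedBall t 1).prod hK).exists_bound_of_continuousOn
    hf'.continuousOn
  have norm_f'_le : ∀ x, ∀ s ∈ Metric.closedBall t 1, ‖f' s x‖ ≤ K.indicator (fun _ ↦ C) x := by
    intro x s hs
    by_cases hx : x ∈ K
    · simpa [hx] using hC (s, x) ⟨hs, hx⟩
    · simp [hx, hsupp' s x hx]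
  have integrable_bound : Integrable (K.indicator fun _ ↦ C) μ :=
    (integrable_indicator_iff hK.measurableSet).2 (integrableOn_const hK.measure_lt_top.ne)
  exact (hasDerivAt_integral_of_dominated_loc_of_deriv_le (Metric.closedBall_mem_nhds t one_pos)
    (.of_forall fun s ↦ (integrable_f s).aestronglyMeasurable) (integrable_f t)
    integrable_f'.aestronglyMeasurable (.of_forall norm_f'_le) integrable_bound
    (.of_forall fun x s _ ↦ hderiv s x)).2

end ParametricIntegral

theorem integral_integral_swap_of_eq_zero_of_notMem_isCompact {X Y F : Type*}
    [TopologicalSpace X] [R1Space X] [MeasurableSpace X] [OpensMeasurableSpace X]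
    [TopologicalSpace Y] [R1Space Y] [MeasurableSpace Y] [OpensMeasurableSpace Y]
    [NormedAddCommGroup F] [NormedSpace ℝ F] {μ : Measure X} {ν : Measure Y}
    [IsFiniteMeasureOnCompacts μ] [IsFiniteMeasureOnCompacts ν] {f : X → Y → F} {K : Set X}
    {L : Set Y} (hf : Continuous (Function.uncurry f)) (hK : IsCompact K) (hL : IsCompact L)
    (hfK : ∀ x ∉ K, ∀ y, f x y = 0) (hfL : ∀ x, ∀ y ∉ L, f x y = 0) :
    ∫ x, ∫ y, f x y ∂ν ∂μ = ∫ y, ∫ x, f x y ∂μ ∂ν := by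
  refine integral_integral_swap_of_hasCompactSupport hf (.intro (hK.prod hL) fun p hp ↦ ?_)
  rcases not_and_or.1 hp with hpK | hpL
  · exact hfK p.1 hpK p.2
  · exact hfL p.1 p.2 hpL

section Divergence

variable {E F : Type*} [NormedAddCommGroup E] [NormedSpace ℝ E] [MeasurableSpace E]
  [NormedAddCommGroup F] [NormedSpace ℝ F] {μ : Measure E}

theorem integrable_fderiv_apply_of_hasCompactSupport [OpensMeasurableSpace E]
    [IsFiniteMeasureOnCompacts μ] {g : E → F} (hg : ContDiff ℝ 1 g) (hsupp : HasCompactSupport g)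
    (v : E) :
    Integrable (fun x ↦ fderiv ℝ g x v) μ :=
  ((hg.continuous_fderiv one_ne_zero).clm_apply continuous_const).integrable_of_hasCompactSupport
    (hsupp.fderiv_apply ℝ v)

variable [BorelSpace E] [FiniteDimensional ℝ E] [μ.IsAddHaarMeasure]

-- Integration by parts against the constant function `1`.
theorem integral_fderiv_apply_eq_zero_of_hasCompactSupport {g : E → F} (hg : ContDiff ℝ 1 g)
    (hsupp : HasCompactSupport g) (v : E) : ∫ x, fderiv ℝ g x v ∂μ = 0 := by
  simpa using integral_smul_fderiv_eq_neg_fderiv_smul_of_integrable (μ := μ)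
    (f := fun _ : E ↦ (1 : ℝ)) (g := g) (v := v) (by simp)
    (by simpa using integrable_fderiv_apply_of_hasCompactSupport hg hsupp v)
    (by simpa using hg.continuous.integrable_of_hasCompactSupport hsupp)
    (fun _ _ ↦ differentiableAt_const _) (fun x _ ↦ hg.differentiable one_ne_zero x)

theorem integral_sum_fderiv_apply_eq_zero_of_hasCompactSupport {ι : Type*} [Fintype ι]
    {J : ι → E → F} (hJ : ∀ i, ContDiff ℝ 1 (J i)) (hsupp : ∀ i, HasCompactSupport (J i))
    (v : ι → E) : ∫ x, ∑ i, fderiv ℝ (J i) x (v i) ∂μ = 0 := by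
  rw [integral_finsetSum _ fun i _ ↦
    integrable_fderiv_apply_of_hasCompactSupport (hJ i) (hsupp i) (v i)]
  exact Finset.sum_eq_zero fun i _ ↦
    integral_fderiv_apply_eq_zero_of_hasCompactSupport (hJ i) (hsupp i) (v i)

end Divergence

section OneParticle

variable {E F ι : Type*} [NormedAddCommGroup E] [NormedSpace ℝ E] [FiniteDimensional ℝ E]
  [MeasurableSpace E] [BorelSpace E] [NormedAddCommGroup F] [NormedSpace ℝ F] [Fintype ι]
  {μ : Measure E} [μ.IsAddHaarMeasure] {ρ : ℝ × E → F} {J : ι → ℝ × E → F} {v : ι → E}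
  {K : Set E}

theorem integral_fderiv_time_eq_zero_of_continuity_equation (hJ : ∀ i, ContDiff ℝ 1 (J i))
    (hcont : ∀ p, fderiv ℝ ρ p (1, 0) + ∑ i, fderiv ℝ (J i) p (0, v i) = 0)
    (hK : IsCompact K) (hJsupp : ∀ i t, ∀ x ∉ K, J i (t, x) = 0) (t : ℝ) :
    ∫ x, fderiv ℝ ρ (t, x) (1, 0) ∂μ = 0 := by
  have time_deriv_eq : ∀ x, fderiv ℝ ρ (t, x) (1, 0) =
      -∑ i, fderiv ℝ (fun y ↦ J i (t, y)) x (v i) := fun x ↦ by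
    simp_rw [fderiv_comp_prodMk_right_apply ((hJ _).differentiable one_ne_zero (t, x))]
    exact eq_neg_of_add_eq_zero_left (hcont (t, x))
  simp_rw [time_deriv_eq, integral_neg, neg_eq_zero]
  exact integral_sum_fderiv_apply_eq_zero_of_hasCompactSupport
    (fun i ↦ (hJ i).comp (contDiff_prodMk_right t)) (fun i ↦ .intro hK (hJsupp i t)) v

theorem integral_eq_integral_of_continuity_equation (hρ : ContDiff ℝ 1 ρ)
    (hJ : ∀ i, ContDiff ℝ 1 (J i))
    (hcont : ∀ p, fderiv ℝ ρ p (1, 0) + ∑ i, fderiv ℝ (J i) p (0, v i) = 0)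
    (hK : IsCompact K) (hρsupp : ∀ t, ∀ x ∉ K, ρ (t, x) = 0)
    (hJsupp : ∀ i t, ∀ x ∉ K, J i (t, x) = 0) (s t : ℝ) :
    ∫ x, ρ (s, x) ∂μ = ∫ x, ρ (t, x) ∂μ := by
  have hasDerivAt_charge : ∀ r, HasDerivAt (fun r ↦ ∫ x, ρ (r, x) ∂μ) 0 r := fun r ↦ by
    rw [← integral_fderiv_time_eq_zero_of_continuity_equation (μ := μ) hJ hcont hK hJsupp r]
    exact hasDerivAt_integral_of_continuous_of_isCompact hK
      (fun t ↦ hρ.continuous.comp (.prodMk_right t))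
      ((hρ.continuous_fderiv one_ne_zero).clm_apply continuous_const)
      (fun t x ↦ hasDerivAt_comp_prodMk_left (hρ.differentiable one_ne_zero (t, x))) hρsupp r
  exact is_const_of_deriv_eq_zero (fun r ↦ (hasDerivAt_charge r).differentiableAt)
    (fun r ↦ (hasDerivAt_charge r).deriv) s t

end OneParticle

section ParticleSlices

variable {E F G ι : Type*} [NormedAddCommGroup E] [NormedSpace ℝ E] [FiniteDimensional ℝ E]
  [MeasurableSpace E] [BorelSpace E] [NormedAddCommGroup F] [NormedSpace ℝ F]
  [NormedAddCommGroup G] [NormedSpace ℝ G] [Fintype ι] {μ : Measure E} [μ.IsAddHaarMeasure]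
  {v : ι → E} {K : Set E}

theorem integral_fst_eq_of_continuity_equation {ρ : (ℝ × E) × G → F}
    {J : ι → (ℝ × E) × G → F} (hρ : ContDiff ℝ 1 ρ) (hJ : ∀ i, ContDiff ℝ 1 (J i))
    (hcont : ∀ p, fderiv ℝ ρ p ((1, 0), 0) + ∑ i, fderiv ℝ (J i) p ((0, v i), 0) = 0)
    (hK : IsCompact K) (hρsupp : ∀ t, ∀ x ∉ K, ∀ q, ρ ((t, x), q) = 0)
    (hJsupp : ∀ i t, ∀ x ∉ K, ∀ q, J i ((t, x), q) = 0) (q : G) (s t : ℝ) :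
    ∫ x, ρ ((s, x), q) ∂μ = ∫ x, ρ ((t, x), q) ∂μ := by
  refine integral_eq_integral_of_continuity_equation (ρ := fun p ↦ ρ (p, q))
    (J := fun i p ↦ J i (p, q)) (v := v) (hρ.comp (contDiff_prodMk_left q))
    (fun i ↦ (hJ i).comp (contDiff_prodMk_left q)) (fun p ↦ ?_) hK
    (fun r x hx ↦ hρsupp r x hx q) (fun i r x hx ↦ hJsupp i r x hx q) s t
  simp_rw [fderiv_comp_prodMk_left_apply (hρ.differentiable one_ne_zero (p, q)),
    fderiv_comp_prodMk_left_apply ((hJ _).differentiable one_ne_zero (p, q))]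
  exact hcont (p, q)

theorem integral_snd_eq_of_continuity_equation {ρ : G × (ℝ × E) → F}
    {J : ι → G × (ℝ × E) → F} (hρ : ContDiff ℝ 1 ρ) (hJ : ∀ i, ContDiff ℝ 1 (J i))
    (hcont : ∀ p, fderiv ℝ ρ p (0, (1, 0)) + ∑ i, fderiv ℝ (J i) p (0, (0, v i)) = 0)
    (hK : IsCompact K) (hρsupp : ∀ p t, ∀ x ∉ K, ρ (p, (t, x)) = 0)
    (hJsupp : ∀ i p t, ∀ x ∉ K, J i (p, (t, x)) = 0) (p : G) (s t : ℝ) :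
    ∫ x, ρ (p, (s, x)) ∂μ = ∫ x, ρ (p, (t, x)) ∂μ := by
  refine integral_eq_integral_of_continuity_equation (ρ := fun q ↦ ρ (p, q))
    (J := fun i q ↦ J i (p, q)) (v := v) (hρ.comp (contDiff_prodMk_right p))
    (fun i ↦ (hJ i).comp (contDiff_prodMk_right p)) (fun q ↦ ?_) hK (hρsupp p)
    (fun i ↦ hJsupp i p) s t
  simp_rw [fderiv_comp_prodMk_right_apply (hρ.differentiable one_ne_zero (p, q)),
    fderiv_comp_prodMk_right_apply ((hJ _).differentiable one_ne_zero (p, q))]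
  exact hcont (p, q)

end ParticleSlices

theorem multitime_continuity_implies_global_conservation_general
    {E₁ E₂ F ι₁ ι₂ : Type*} [NormedAddCommGroup E₁] [NormedSpace ℝ E₁] [FiniteDimensional ℝ E₁]
    [MeasurableSpace E₁] [BorelSpace E₁] [NormedAddCommGroup E₂] [NormedSpace ℝ E₂]
    [FiniteDimensional ℝ E₂] [MeasurableSpace E₂] [BorelSpace E₂] [NormedAddCommGroup F]
    [NormedSpace ℝ F] [CompleteSpace F] [Fintype ι₁] [Fintype ι₂]
    {μ₁ : Measure E₁} [μ₁.IsAddHaarMeasure] {μ₂ : Measure E₂} [μ₂.IsAddHaarMeasure]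
    {ρ : (ℝ × E₁) × (ℝ × E₂) → F} {J₁ : ι₁ → (ℝ × E₁) × (ℝ × E₂) → F}
    {J₂ : ι₂ → (ℝ × E₁) × (ℝ × E₂) → F} {v₁ : ι₁ → E₁} {v₂ : ι₂ → E₂}
    (hρ : ContDiff ℝ 1 ρ) (hJ₁ : ∀ i, ContDiff ℝ 1 (J₁ i)) (hJ₂ : ∀ i, ContDiff ℝ 1 (J₂ i))
    (hcont₁ : ∀ p, fderiv ℝ ρ p ((1, 0), 0) + ∑ i, fderiv ℝ (J₁ i) p ((0, v₁ i), 0) = 0)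
    (hcont₂ : ∀ p, fderiv ℝ ρ p (0, (1, 0)) + ∑ i, fderiv ℝ (J₂ i) p (0, (0, v₂ i)) = 0)
    {K₁ : Set E₁} {K₂ : Set E₂} (hK₁ : IsCompact K₁) (hK₂ : IsCompact K₂)
    (hρsupp₁ : ∀ t, ∀ x ∉ K₁, ∀ q, ρ ((t, x), q) = 0)
    (hρsupp₂ : ∀ p t, ∀ x ∉ K₂, ρ (p, (t, x)) = 0)
    (hJsupp₁ : ∀ i t, ∀ x ∉ K₁, ∀ q, J₁ i ((t, x), q) = 0)
    (hJsupp₂ : ∀ i p t, ∀ x ∉ K₂, J₂ i (p, (t, x)) = 0) (s₁ s₂ t₁ t₂ : ℝ) :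
    ∫ x₁, ∫ x₂, ρ ((s₁, x₁), (s₂, x₂)) ∂μ₂ ∂μ₁ =
      ∫ x₁, ∫ x₂, ρ ((t₁, x₁), (t₂, x₂)) ∂μ₂ ∂μ₁ := by
  have swap : ∀ r₁ r₂, ∫ x₁, ∫ x₂, ρ ((r₁, x₁), (r₂, x₂)) ∂μ₂ ∂μ₁ =
      ∫ x₂, ∫ x₁, ρ ((r₁, x₁), (r₂, x₂)) ∂μ₁ ∂μ₂ := fun r₁ r₂ ↦
    integral_integral_swap_of_eq_zero_of_notMem_isCompact
      (hρ.continuous.comp (by fun_prop : Continuous fun x : E₁ × E₂ ↦ ((r₁, x.1), (r₂, x.2))))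
      hK₁ hK₂ (fun x₁ hx₁ _ ↦ hρsupp₁ r₁ x₁ hx₁ _) (fun _ ↦ hρsupp₂ _ r₂)
  calc ∫ x₁, ∫ x₂, ρ ((s₁, x₁), (s₂, x₂)) ∂μ₂ ∂μ₁
      = ∫ x₁, ∫ x₂, ρ ((s₁, x₁), (t₂, x₂)) ∂μ₂ ∂μ₁ := by
        congr 1 with x₁
        exact integral_snd_eq_of_continuity_equation hρ hJ₂ hcont₂ hK₂ hρsupp₂ hJsupp₂ _ s₂ t₂
    _ = ∫ x₂, ∫ x₁, ρ ((s₁, x₁), (t₂, x₂)) ∂μ₁ ∂μ₂ := swap s₁ t₂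
    _ = ∫ x₂, ∫ x₁, ρ ((t₁, x₁), (t₂, x₂)) ∂μ₁ ∂μ₂ := by
        congr 1 with x₂
        exact integral_fst_eq_of_continuity_equation hρ hJ₁ hcont₁ hK₁ hρsupp₁ hJsupp₁ _ s₁ t₁
    _ = ∫ x₁, ∫ x₂, ρ ((t₁, x₁), (t₂, x₂)) ∂μ₂ ∂μ₁ := (swap t₁ t₂).symm

theorem dir4_zero : dir4 0 = (1, 0) := rfl

theorem dir4_succ (k : Fin 3) : dir4 k.succ = (0, Pi.single k 1) := rfl

/-- A continuously differentiable two-particle tensor current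
`j^{μν}(x₁, x₂)` with spatially compact support satisfying the two multi-time
continuity equations `Σ_μ ∂_{x₁^μ} j^{μν} = 0` and `Σ_ν ∂_{x₂^ν} j^{μν} = 0`
has a conserved generalized probability integral: the double spatial integral
`(t₁, t₂) ↦ ∫∫ j^{00}(t₁, 𝐱₁, t₂, 𝐱₂) d𝐱₁ d𝐱₂` is independent of `(t₁, t₂)`. -/
theorem multitime_continuity_implies_global_conservation
    (j : (ℝ × (Fin 3 → ℝ)) × (ℝ × (Fin 3 → ℝ)) → Fin 4 → Fin 4 → ℝ)
    (hj : ContDiff ℝ 1 j)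
    (hcont₁ : ∀ ν : Fin 4, ∀ p, ∑ μ, fderiv ℝ (fun q => j q μ ν) p (dir4 μ, 0) = 0)
    (hcont₂ : ∀ μ : Fin 4, ∀ p, ∑ ν, fderiv ℝ (fun q => j q μ ν) p (0, dir4 ν) = 0)
    (K₁ K₂ : Set (Fin 3 → ℝ)) (hK₁ : IsCompact K₁) (hK₂ : IsCompact K₂)
    (hsupp : ∀ t₁ x₁ t₂ x₂, x₁ ∉ K₁ ∨ x₂ ∉ K₂ → j ((t₁, x₁), (t₂, x₂)) = 0)
    (s₁ s₂ t₁ t₂ : ℝ) :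
    ∫ x₁, ∫ x₂, j ((s₁, x₁), (s₂, x₂)) 0 0 = ∫ x₁, ∫ x₂, j ((t₁, x₁), (t₂, x₂)) 0 0 := by
  have supp₁ : ∀ μ ν t, ∀ x ∉ K₁, ∀ q, j ((t, x), q) μ ν = 0 := fun μ ν t x hx q ↦ by
    simp [hsupp t x q.1 q.2 (.inl hx)]
  have supp₂ : ∀ μ ν p t, ∀ x ∉ K₂, j (p, (t, x)) μ ν = 0 := fun μ ν p t x hx ↦ by
    simp [hsupp p.1 p.2 t x (.inr hx)]
  simp only [Fin.sum_univ_succ (n := 3), dir4_zero, dir4_succ] at hcont₁ hcont₂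
  exact multitime_continuity_implies_global_conservation_general
    (ρ := fun p ↦ j p 0 0) (J₁ := fun (k : Fin 3) p ↦ j p k.succ 0)
    (J₂ := fun (k : Fin 3) p ↦ j p 0 k.succ)
    (by fun_prop) (by fun_prop) (by fun_prop) (hcont₁ 0) (hcont₂ 0) hK₁ hK₂
    (supp₁ 0 0) (supp₂ 0 0) (fun k ↦ supp₁ k.succ 0) (fun k ↦ supp₂ 0 k.succ) s₁ s₂ t₁ t₂
end

section
/- Let j : ℝ × ℝ³ → ℝ⁴, written j = (j⁰, j¹, j², j³), be continuously differentiable with spatially compact support (there is a compact K ⊂ ℝ³ with j(t, 𝐱) = 0 for 𝐱 ∉ K). Suppose that the flux F(τ) = ∫_{ℝ³} ( j⁰(τ(𝐱), 𝐱) − Σ_{k=1}^{3} j^k(τ(𝐱), 𝐱) ∂_k τ(𝐱) ) d𝐱 takes the same value for every smooth function τ : ℝ³ → ℝ which is constant outside some compact set and satisfies sup_{𝐱} |∇τ(𝐱)| < 1. Then j satisfies the continuity equation ∂_t j⁰ + Σ_{k=1}^{3} ∂_{x^k} j^k = 0 everywhere. -/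
open MeasureTheory

/-!
Deform the flat surface `t = const` to the graph of `t + s φ`, where `φ` is a test function and `s`
is so small that the graph is still space-like. Differentiating the flux at `s = 0` and integrating
by parts in space gives `∫ φ div j (t, ·)`, the infinitesimal form of the divergence theorem for the
bubble between the two surfaces. The flux does not depend on `s`, so this integral vanishes for
every `φ`, and `div j`, being continuous, is zero.
-/

open scoped ContDiff Topology

section Trace

variable {R M N : Type*} [CommRing R] [AddCommGroup M] [Module R M] [Module.Free R M]
  [Module.Finite R M] [AddCommGroup N] [Module R N] [Module.Free R N] [Module.Finite R N]

open LinearMap in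
theorem trace_prod_eq_add (f : M × N →ₗ[R] M × N) :
    trace R (M × N) f =
      trace R M (fst R M N ∘ₗ f ∘ₗ inl R M N) + trace R N (snd R M N ∘ₗ f ∘ₗ inr R M N) := by
  calc trace R (M × N) f
      = trace R (M × N) ((f ∘ₗ inl R M N) ∘ₗ fst R M N + (f ∘ₗ inr R M N) ∘ₗ snd R M N) := by
        congr 1; ext <;> simp [← Prod.zero_eq_mk]
    _ = _ := by rw [map_add, trace_comp_comm' (fst R M N), trace_comp_comm' (snd R M N)]

end Trace

section ParametricIntegral

variable {X F : Type*} [TopologicalSpace X] [T2Space X] [MeasurableSpace X]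
  [OpensMeasurableSpace X] {μ : Measure X} [IsFiniteMeasureOnCompacts μ]
  [NormedAddCommGroup F] [NormedSpace ℝ F]

theorem hasDerivAt_integral_of_continuous_of_compact_support {f f' : ℝ → X → F} {K : Set X}
    (hf : Continuous ↿f) (hf' : Continuous ↿f') (hderiv : ∀ s x, HasDerivAt (f · x) (f' s x) s)
    (hK : IsCompact K) (hfK : ∀ s, ∀ x ∉ K, f s x = 0) (s₀ : ℝ) :
    HasDerivAt (fun s ↦ ∫ x, f s x ∂μ) (∫ x, f' s₀ x ∂μ) s₀ := by
  have hf'K : ∀ s, ∀ x ∉ K, f' s x = 0 := fun s x hx ↦ by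
    have hzero : HasDerivAt (fun _ : ℝ ↦ (0 : F)) (f' s x) s := by
      simpa only [hfK _ x hx] using hderiv s x
    exact hzero.unique (hasDerivAt_const s 0)
  have integrable_slice : ∀ {g : ℝ → X → F}, Continuous ↿g → (∀ s, ∀ x ∉ K, g s x = 0) →
      ∀ s, Integrable (g s) μ := fun hg hgK s ↦
    (hg.comp (Continuous.prodMk_right s)).integrable_of_hasCompactSupport
      (HasCompactSupport.intro hK (hgK s))
  obtain ⟨C, hC⟩ := ((isCompact_closedBall s₀ 1).prod hK).exists_bound_of_continuousOn
    hf'.continuousOn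
  refine (hasDerivAt_integral_of_dominated_loc_of_deriv_le (bound := K.indicator fun _ ↦ C)
    (Metric.closedBall_mem_nhds s₀ one_pos)
    (.of_forall fun s ↦ (integrable_slice hf hfK s).aestronglyMeasurable)
    (integrable_slice hf hfK s₀) (integrable_slice hf' hf'K s₀).aestronglyMeasurable
    (.of_forall fun x s hs ↦ ?_)
    ((integrable_indicator_iff hK.measurableSet).2 (integrableOn_const hK.measure_lt_top.ne))
    (.of_forall fun x s _ ↦ hderiv s x)).2
  by_cases hx : x ∈ K
  · exact (hC (s, x) ⟨hs, hx⟩).trans_eq (Set.indicator_of_mem hx fun _ ↦ C).symm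
  · simp only [hf'K s x hx, norm_zero, Set.indicator_of_notMem hx, le_refl]

end ParametricIntegral

section Divergence

variable {E : Type*} [NormedAddCommGroup E] [NormedSpace ℝ E]

theorem fderiv_comp_prodMk_right {F G : Type*} [NormedAddCommGroup F] [NormedSpace ℝ F]
    [NormedAddCommGroup G] [NormedSpace ℝ G] {f : E × F → G} {p : E × F}
    (hf : DifferentiableAt ℝ f p) :
    fderiv ℝ (fun y ↦ f (p.1, y)) p.2 = fderiv ℝ f p ∘L .inr ℝ E F :=
  (hf.hasFDerivAt.comp p.2 (hasFDerivAt_prodMk_right p.1 p.2)).fderiv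

theorem integrable_fderiv_apply {F : Type*} [NormedAddCommGroup F] [NormedSpace ℝ F]
    [MeasurableSpace E] [OpensMeasurableSpace E] {μ : Measure E} [IsFiniteMeasureOnCompacts μ]
    {f : E → F} {V : E → E} (hf : ContDiff ℝ 1 f) (hfc : HasCompactSupport f)
    (hV : Continuous V) : Integrable (fun x ↦ fderiv ℝ f x (V x)) μ :=
  ((hf.continuous_fderiv one_ne_zero).clm_apply hV).integrable_of_hasCompactSupport
    ((hfc.fderiv ℝ).mono fun x hx hx' ↦ hx (by simp [hx']))

/-- The divergence of a vector field, as the trace of its derivative. It needs no choice of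
coordinates and serves both for fields on space and for currents on space-time `ℝ × E`; in infinite
dimension it has the junk value `0`. -/
noncomputable def divergence (V : E → E) (x : E) : ℝ :=
  LinearMap.trace ℝ E (fderiv ℝ V x)

theorem divergence_pi {ι : Type*} [Fintype ι] [DecidableEq ι] {V : (ι → ℝ) → ι → ℝ} {x : ι → ℝ}
    (hV : DifferentiableAt ℝ V x) :
    divergence V x = ∑ i, fderiv ℝ (fun y ↦ V y i) x (Pi.single i 1) := by
  rw [divergence, LinearMap.trace_eq_matrix_trace ℝ (Pi.basisFun ℝ ι), Matrix.trace]
  refine Finset.sum_congr rfl fun i _ ↦ ?_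
  simp [fderiv_apply hV]

variable [FiniteDimensional ℝ E]

theorem divergence_prod {j : ℝ × E → ℝ × E} {p : ℝ × E} (hj : DifferentiableAt ℝ j p) :
    divergence j p = (fderiv ℝ j p (1, 0)).1 + divergence (fun y ↦ (j (p.1, y)).2) p.2 := by
  have spatial_fderiv : fderiv ℝ (fun y ↦ (j (p.1, y)).2) p.2 =
      .snd ℝ ℝ E ∘L fderiv ℝ j p ∘L .inr ℝ ℝ E := by
    rw [fderiv_comp_prodMk_right hj.snd, fderiv.snd hj, ContinuousLinearMap.comp_assoc]
  rw [divergence, divergence, trace_prod_eq_add, spatial_fderiv]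
  congr 1
  rw [LinearMap.trace_eq_matrix_trace ℝ (Module.Basis.singleton Unit ℝ)]
  simp [Matrix.trace, LinearMap.toMatrix_apply]

theorem divergence_smul {φ : E → ℝ} {V : E → E} {x : E} (hφ : DifferentiableAt ℝ φ x)
    (hV : DifferentiableAt ℝ V x) :
    divergence (fun y ↦ φ y • V y) x = φ x * divergence V x + fderiv ℝ φ x (V x) := by
  rw [divergence, fderiv_fun_smul hφ hV, ContinuousLinearMap.toLinearMap_add, map_add]
  simp [divergence]

/-- The trace as a continuous functional, available because `E` is finite-dimensional. It lets the
trace be exchanged with limits and integrals of derivatives. -/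
noncomputable def traceCLM (E : Type*) [NormedAddCommGroup E] [NormedSpace ℝ E]
    [FiniteDimensional ℝ E] : (E →L[ℝ] E) →L[ℝ] ℝ :=
  LinearMap.toContinuousLinearMap (LinearMap.trace ℝ E ∘ₗ ContinuousLinearMap.coeLM ℝ)

theorem traceCLM_fderiv (V : E → E) (x : E) : traceCLM E (fderiv ℝ V x) = divergence V x := rfl

theorem continuous_divergence {V : E → E} (hV : ContDiff ℝ 1 V) : Continuous (divergence V) :=
  (traceCLM E).continuous.comp (hV.continuous_fderiv one_ne_zero)

variable [MeasurableSpace E] [BorelSpace E] {μ : Measure E} [μ.IsAddHaarMeasure]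

theorem integral_fderiv_eq_zero {F : Type*} [NormedAddCommGroup F] [NormedSpace ℝ F] {f : E → F}
    (hf : ContDiff ℝ 1 f) (hfc : HasCompactSupport f) : ∫ x, fderiv ℝ f x ∂μ = 0 := by
  have hf' : Continuous (fderiv ℝ f) := hf.continuous_fderiv one_ne_zero
  have hf'_int : Integrable (fderiv ℝ f) μ := hf'.integrable_of_hasCompactSupport (hfc.fderiv ℝ)
  ext v
  rw [ContinuousLinearMap.integral_apply hf'_int]
  simpa using integral_smul_fderiv_eq_neg_fderiv_smul_of_integrable (μ := μ) (v := v)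
    (f := fun _ ↦ (1 : ℝ)) (g := f) (by simp) (by simpa using hf'_int.apply_continuousLinearMap v)
    (by simpa using hf.continuous.integrable_of_hasCompactSupport hfc) (fun _ _ ↦ by fun_prop)
    (fun x _ ↦ hf.differentiable one_ne_zero x)

theorem integral_divergence_eq_zero {V : E → E} (hV : ContDiff ℝ 1 V)
    (hVc : HasCompactSupport V) : ∫ x, divergence V x ∂μ = 0 := by
  have hV'_int : Integrable (fderiv ℝ V) μ :=
    (hV.continuous_fderiv one_ne_zero).integrable_of_hasCompactSupport (hVc.fderiv ℝ)
  simp only [← traceCLM_fderiv]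
  rw [(traceCLM E).integral_comp_comm hV'_int, integral_fderiv_eq_zero hV hVc, map_zero]

theorem integral_mul_divergence_eq_neg {φ : E → ℝ} {V : E → E} (hφ : ContDiff ℝ 1 φ)
    (hφc : HasCompactSupport φ) (hV : ContDiff ℝ 1 V) :
    ∫ x, φ x * divergence V x ∂μ = -∫ x, fderiv ℝ φ x (V x) ∂μ := by
  have hφdiv : Integrable (fun x ↦ φ x * divergence V x) μ :=
    (hφ.continuous.mul (continuous_divergence hV)).integrable_of_hasCompactSupport hφc.mul_right
  rw [eq_neg_iff_add_eq_zero, ← integral_add hφdiv (integrable_fderiv_apply hφ hφc hV.continuous),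
    ← integral_divergence_eq_zero (μ := μ) (hφ.smul hV) hφc.smul_right]
  exact integral_congr_ae (.of_forall fun x ↦
    (divergence_smul (hφ.differentiable one_ne_zero x) (hV.differentiable one_ne_zero x)).symm)

end Divergence

section CauchyGraph

variable {E : Type*} [NormedAddCommGroup E] [NormedSpace ℝ E]

/-- The functions `τ` whose graphs serve as Cauchy surfaces in `ℝ × E`: smooth, constant outside a
compact set, and of slope uniformly below the speed of light `1`. The slope is measured by the
operator norm of `dτ`, that is by the norm dual to the one of `E`. -/
structure IsCauchyGraph (τ : E → ℝ) : Prop where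
  contDiff : ContDiff ℝ ∞ τ
  eq_const_off_compact : ∃ (C : Set E) (r : ℝ), IsCompact C ∧ ∀ x ∉ C, τ x = r
  norm_fderiv_le : ∃ c < (1 : ℝ), ∀ x, ‖fderiv ℝ τ x‖ ≤ c

theorem fderiv_const_add_mul {φ : E → ℝ} {x : E} (hφ : DifferentiableAt ℝ φ x) (t s : ℝ) :
    fderiv ℝ (fun y ↦ t + s * φ y) x = s • fderiv ℝ φ x :=
  ((hφ.hasFDerivAt.const_mul s).const_add t).fderiv

theorem hasDerivAt_comp_const_add_mul {F : Type*} [NormedAddCommGroup F] [NormedSpace ℝ F]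
    {j : ℝ × E → F} (hj : Differentiable ℝ j) (φ : E → ℝ) (t s : ℝ) (x : E) :
    HasDerivAt (fun s ↦ j (t + s * φ x, x)) (φ x • fderiv ℝ j (t + s * φ x, x) (1, 0)) s := by
  have hline : HasDerivAt (fun s ↦ (t + s * φ x, x)) (φ x • ((1 : ℝ), (0 : E))) s := by
    simpa using (((hasDerivAt_id s).mul_const (φ x)).const_add t).prodMk (hasDerivAt_const s x)
  simpa only [map_smul, Function.comp_def] using! (hj _).hasFDerivAt.comp_hasDerivAt s hline

theorem eventually_isCauchyGraph_const_add_mul {φ : E → ℝ} (hφ : ContDiff ℝ ∞ φ)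
    (hφc : HasCompactSupport φ) (t : ℝ) : ∀ᶠ s in 𝓝 (0 : ℝ), IsCauchyGraph fun x ↦ t + s * φ x := by
  obtain ⟨M, hM⟩ := (hφc.fderiv ℝ).exists_bound_of_continuous (hφ.continuous_fderiv (by simp))
  have small_slope : ∀ᶠ s in 𝓝 (0 : ℝ), |s| * M < 1 := by
    have hcont : Continuous fun s : ℝ ↦ |s| * M := by fun_prop
    exact hcont.continuousAt.eventually_lt_const (by simp)
  filter_upwards [small_slope] with s hs
  refine ⟨by fun_prop, ⟨tsupport φ, t, hφc, fun x hx ↦ ?_⟩, |s| * M, hs, fun x ↦ ?_⟩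
  · simp [image_eq_zero_of_notMem_tsupport hx]
  · rw [fderiv_const_add_mul (hφ.differentiable (by simp) x), norm_smul, Real.norm_eq_abs]
    gcongr
    exact hM x

end CauchyGraph

section Flux

variable {E : Type*} [NormedAddCommGroup E] [NormedSpace ℝ E] [MeasurableSpace E]

/-- The flux of the space-time current `j = (j⁰, 𝐣)` through the graph of `τ`, pulled back to `E`,
where `-dτ(𝐣)` accounts for the tilt of the surface normal. -/
noncomputable def flux (μ : Measure E) (j : ℝ × E → ℝ × E) (τ : E → ℝ) : ℝ :=
  ∫ x, ((j (τ x, x)).1 - fderiv ℝ τ x (j (τ x, x)).2) ∂μ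

variable [BorelSpace E] {μ : Measure E} {j : ℝ × E → ℝ × E} {K : Set E} {φ : E → ℝ}

theorem hasDerivAt_flux_const_add_mul [IsFiniteMeasureOnCompacts μ] (hj : ContDiff ℝ 1 j)
    (hK : IsCompact K) (hjK : ∀ t, ∀ x ∉ K, j (t, x) = 0) (hφ : ContDiff ℝ 1 φ) (t : ℝ) :
    HasDerivAt (fun s ↦ flux μ j fun x ↦ t + s * φ x)
      (∫ x, (φ x * (fderiv ℝ j (t, x) (1, 0)).1 - fderiv ℝ φ x (j (t, x)).2) ∂μ) 0 := by
  let density (s : ℝ) (x : E) : ℝ :=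
    (j (t + s * φ x, x)).1 - s * fderiv ℝ φ x (j (t + s * φ x, x)).2
  let density' (s : ℝ) (x : E) : ℝ :=
    φ x * (fderiv ℝ j (t + s * φ x, x) (1, 0)).1 - (fderiv ℝ φ x (j (t + s * φ x, x)).2 +
      s * (φ x * fderiv ℝ φ x (fderiv ℝ j (t + s * φ x, x) (1, 0)).2))
  have flux_eq (s : ℝ) : flux μ j (fun x ↦ t + s * φ x) = ∫ x, density s x ∂μ := by
    simp [flux, density, fderiv_const_add_mul (hφ.differentiable one_ne_zero _)]
  have hderiv (s : ℝ) (x : E) : HasDerivAt (density · x) (density' s x) s := by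
    have hjs := hasDerivAt_comp_const_add_mul (hj.differentiable one_ne_zero) φ t s x
    have hj₀ : HasDerivAt (fun s ↦ (j (t + s * φ x, x)).1)
        (φ x * (fderiv ℝ j (t + s * φ x, x) (1, 0)).1) s :=
      (ContinuousLinearMap.fst ℝ ℝ E).hasFDerivAt.comp_hasDerivAt s hjs
    have hflow : HasDerivAt (fun s ↦ fderiv ℝ φ x (j (t + s * φ x, x)).2)
        (φ x * fderiv ℝ φ x (fderiv ℝ j (t + s * φ x, x) (1, 0)).2) s := by
      simpa using! (fderiv ℝ φ x ∘L .snd ℝ ℝ E).hasFDerivAt.comp_hasDerivAt s hjs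
    simpa [density'] using! hj₀.sub ((hasDerivAt_id s).mul hflow)
  have := hj.continuous
  have := hφ.continuous
  have := hj.continuous_fderiv one_ne_zero
  have := hφ.continuous_fderiv one_ne_zero
  have hcont : Continuous ↿density := by fun_prop
  have hcont' : Continuous ↿density' := by fun_prop
  simp only [flux_eq]
  simpa [density'] using hasDerivAt_integral_of_continuous_of_compact_support hcont hcont' hderiv hK
    (fun s x hx ↦ by simp [density, hjK _ x hx]) 0

variable [FiniteDimensional ℝ E] [μ.IsAddHaarMeasure]

theorem integral_mul_divergence_slice (hj : ContDiff ℝ 1 j) (hφ : ContDiff ℝ 1 φ)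
    (hφc : HasCompactSupport φ) (t : ℝ) :
    ∫ x, φ x * divergence j (t, x) ∂μ =
      ∫ x, (φ x * (fderiv ℝ j (t, x) (1, 0)).1 - fderiv ℝ φ x (j (t, x)).2) ∂μ := by
  have := hφ.continuous
  have := hj.continuous_fderiv one_ne_zero
  have hspatial : ContDiff ℝ 1 fun x ↦ (j (t, x)).2 := by fun_prop
  have := continuous_divergence hspatial
  have htime_int : Integrable (fun x ↦ φ x * (fderiv ℝ j (t, x) (1, 0)).1) μ :=
    Continuous.integrable_of_hasCompactSupport (by fun_prop) hφc.mul_right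
  have hdiv_int : Integrable (fun x ↦ φ x * divergence (fun y ↦ (j (t, y)).2) x) μ :=
    Continuous.integrable_of_hasCompactSupport (by fun_prop) hφc.mul_right
  have hflow_int := integrable_fderiv_apply (μ := μ) hφ hφc hspatial.continuous
  simp only [divergence_prod (hj.differentiable one_ne_zero _), mul_add]
  rw [integral_add htime_int hdiv_int, integral_sub htime_int hflow_int,
    integral_mul_divergence_eq_neg hφ hφc hspatial, sub_eq_add_neg]

theorem integral_mul_divergence_eq_zero_of_flux_eq (hj : ContDiff ℝ 1 j) (hK : IsCompact K)
    (hjK : ∀ t, ∀ x ∉ K, j (t, x) = 0)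
    (hflux : ∀ τ₁ τ₂, IsCauchyGraph τ₁ → IsCauchyGraph τ₂ → flux μ j τ₁ = flux μ j τ₂)
    (hφ : ContDiff ℝ ∞ φ) (hφc : HasCompactSupport φ) (t : ℝ) :
    ∫ x, φ x * divergence j (t, x) ∂μ = 0 := by
  have hφ₁ : ContDiff ℝ 1 φ := hφ.of_le (mod_cast le_top)
  have hgraph := eventually_isCauchyGraph_const_add_mul hφ hφc t
  have flux_const : (fun s : ℝ ↦ flux μ j fun x ↦ t + s * φ x) =ᶠ[𝓝 0]
      fun _ ↦ flux μ j fun x ↦ t + 0 * φ x :=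
    hgraph.mono fun s hs ↦ hflux _ _ hs hgraph.self_of_nhds
  rw [integral_mul_divergence_slice hj hφ₁ hφc]
  exact (hasDerivAt_flux_const_add_mul hj hK hjK hφ₁ t).unique
    ((hasDerivAt_const 0 _).congr_of_eventuallyEq flux_const)

theorem global_conservation_on_cauchy_surfaces_implies_continuity_general
    (hj : ContDiff ℝ 1 j) (hK : IsCompact K) (hjK : ∀ t, ∀ x ∉ K, j (t, x) = 0)
    (hflux : ∀ τ₁ τ₂, IsCauchyGraph τ₁ → IsCauchyGraph τ₂ → flux μ j τ₁ = flux μ j τ₂)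
    (p : ℝ × E) : divergence j p = 0 := by
  have hcont : Continuous fun x ↦ divergence j (p.1, x) :=
    (continuous_divergence hj).comp (Continuous.prodMk_right p.1)
  have hae : (fun x ↦ divergence j (p.1, x)) =ᵐ[μ] fun _ ↦ 0 :=
    ae_eq_zero_of_integral_contDiff_smul_eq_zero hcont.locallyIntegrable fun φ hφ hφc ↦
      integral_mul_divergence_eq_zero_of_flux_eq hj hK hjK hflux hφ hφc p.1
  exact congrFun ((hcont.ae_eq_iff_eq μ continuous_const).1 hae) p.2

end Flux

section Coordinates

variable {ι : Type*} [Fintype ι] [DecidableEq ι]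

theorem clm_pi_apply_eq_sum (L : (ι → ℝ) →L[ℝ] ℝ) (v : ι → ℝ) :
    L v = ∑ i, v i * L (Pi.single i 1) := by
  conv_lhs => rw [pi_eq_sum_univ' v]
  simp

theorem flux_pi (μ : Measure (ι → ℝ)) (j : ℝ × (ι → ℝ) → ℝ × (ι → ℝ)) (τ : (ι → ℝ) → ℝ) :
    flux μ j τ =
      ∫ x, ((j (τ x, x)).1 - ∑ i, (j (τ x, x)).2 i * fderiv ℝ τ x (Pi.single i 1)) ∂μ := by
  simp only [flux, clm_pi_apply_eq_sum (fderiv ℝ τ _) (j _).2]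

/-- `ι → ℝ` carries the sup norm, so `‖L‖` is the `ℓ¹` norm of the coefficients of `L`. -/
theorem sqrt_sum_sq_clm_pi_single_le (L : (ι → ℝ) →L[ℝ] ℝ) :
    √(∑ i, L (Pi.single i 1) ^ 2) ≤ ‖L‖ := by
  let grad : ι → ℝ := fun i ↦ L (Pi.single i 1)
  have norm_grad_le : ‖grad‖ ≤ ‖L‖ := (pi_norm_le_iff_of_nonneg (norm_nonneg L)).2 fun i ↦
    L.unit_le_opNorm _ (by simp [Pi.norm_single])
  refine Real.sqrt_le_iff.2 ⟨norm_nonneg L, ?_⟩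
  calc ∑ i, L (Pi.single i 1) ^ 2 = L grad := by simp [clm_pi_apply_eq_sum L grad, grad, sq]
    _ ≤ ‖L‖ * ‖grad‖ := (le_abs_self _).trans (L.le_opNorm grad)
    _ ≤ ‖L‖ ^ 2 := by rw [sq]; gcongr

theorem IsCauchyGraph.sqrt_sum_sq_partial_le {τ : (ι → ℝ) → ℝ} (hτ : IsCauchyGraph τ) :
    ∃ c < (1 : ℝ), ∀ x, √(∑ i, fderiv ℝ τ x (Pi.single i 1) ^ 2) ≤ c :=
  let ⟨c, hc, hle⟩ := hτ.norm_fderiv_le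
  ⟨c, hc, fun x ↦ (sqrt_sum_sq_clm_pi_single_le _).trans (hle x)⟩

theorem divergence_eq_sum_dir4 {j : ℝ × (Fin 3 → ℝ) → Fin 4 → ℝ} (hj : Differentiable ℝ j)
    (p : ℝ × (Fin 3 → ℝ)) :
    divergence (fun q ↦ (j q 0, fun k ↦ j q k.succ)) p =
      ∑ μ, fderiv ℝ (fun q ↦ j q μ) p (dir4 μ) := by
  have hj_coord (μ : Fin 4) : DifferentiableAt ℝ (fun q ↦ j q μ) p := by fun_prop
  have htime : (fderiv ℝ (fun q ↦ (j q 0, fun k : Fin 3 ↦ j q k.succ)) p (1, 0)).1 =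
      fderiv ℝ (fun q ↦ j q 0) p (dir4 0) := by
    rw [(hj_coord 0).fderiv_prodMk (by fun_prop)]
    rfl
  have hspace (k : Fin 3) : fderiv ℝ (fun y ↦ j (p.1, y) k.succ) p.2 (Pi.single k 1) =
      fderiv ℝ (fun q ↦ j q k.succ) p (dir4 k.succ) := by
    rw [fderiv_comp_prodMk_right (hj_coord k.succ)]
    simp [dir4]
  rw [divergence_prod (by fun_prop), divergence_pi (by fun_prop), htime,
    Fin.sum_univ_succ (n := 3)]
  simp only [hspace]

end Coordinates

/-- the 'bubble argument': Let `j : ℝ × ℝ³ → ℝ⁴` be a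
continuously differentiable current with spatially compact support. If the
flux `F(τ) = ∫ (j⁰(τ(𝐱),𝐱) − Σ_k j^k(τ(𝐱),𝐱) ∂_k τ(𝐱)) d𝐱` takes the same
value for every smooth `τ : ℝ³ → ℝ` which is constant outside some compact
set and has Euclidean gradient norm with supremum `< 1`, then `j` satisfies
the continuity equation `∂_t j⁰ + Σ_k ∂_{x^k} j^k = 0` everywhere. -/
theorem global_conservation_on_cauchy_surfaces_implies_continuity
    (j : ℝ × (Fin 3 → ℝ) → Fin 4 → ℝ)
    (hj : ContDiff ℝ 1 j)
    (K : Set (Fin 3 → ℝ)) (hK : IsCompact K)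
    (hsupp : ∀ t x, x ∉ K → j (t, x) = 0)
    (hflux : ∀ τ₁ τ₂ : (Fin 3 → ℝ) → ℝ,
      ContDiff ℝ (⊤ : ℕ∞) τ₁ → ContDiff ℝ (⊤ : ℕ∞) τ₂ →
      (∃ (C : Set (Fin 3 → ℝ)) (r : ℝ), IsCompact C ∧ ∀ x ∉ C, τ₁ x = r) →
      (∃ (C : Set (Fin 3 → ℝ)) (r : ℝ), IsCompact C ∧ ∀ x ∉ C, τ₂ x = r) →
      (∃ c < (1 : ℝ), ∀ x,
        Real.sqrt (∑ k : Fin 3, (fderiv ℝ τ₁ x (Pi.single k 1)) ^ 2) ≤ c) →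
      (∃ c < (1 : ℝ), ∀ x,
        Real.sqrt (∑ k : Fin 3, (fderiv ℝ τ₂ x (Pi.single k 1)) ^ 2) ≤ c) →
      ∫ x, (j (τ₁ x, x) 0
          - ∑ k : Fin 3, j (τ₁ x, x) k.succ * fderiv ℝ τ₁ x (Pi.single k 1))
        = ∫ x, (j (τ₂ x, x) 0
          - ∑ k : Fin 3, j (τ₂ x, x) k.succ * fderiv ℝ τ₂ x (Pi.single k 1))) :
    ∀ p, ∑ μ, fderiv ℝ (fun q => j q μ) p (dir4 μ) = 0 := by
  intro p
  rw [← divergence_eq_sum_dir4 (hj.differentiable one_ne_zero)]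
  refine global_conservation_on_cauchy_surfaces_implies_continuity_general (μ := volume)
    (by fun_prop) hK (fun t x hx ↦ by simp [hsupp t x hx, ← Pi.zero_def]) (fun τ₁ τ₂ hτ₁ hτ₂ ↦ ?_) p
  simpa only [flux_pi] using
    hflux τ₁ τ₂ hτ₁.contDiff hτ₂.contDiff hτ₁.eq_const_off_compact hτ₂.eq_const_off_compact
      hτ₁.sqrt_sum_sq_partial_le hτ₂.sqrt_sum_sq_partial_le
end
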